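/- arXiv:2004.07958 — 2 statements merged into one kernel-verified Lean document; each statement's English description precedes it below -/
import Mathlib

section
/- For any t ∈ ½ℤ, the identity Σ_{(j,n)∈J^F_{-t}} s(j) q_n^j ⊗ q_j^{n+1} = -Σ_{(i,m)∈J^F_{t-1}} q_i^{m+1} ⊗ q_m^i holds in g ⊗ g. -/
open Finsupp TensorProduct
open scoped Classical

noncomputable section

/-- sign $(-1)^{p(a)p(b)}$ expressed through the parity signs ζa, ζb ∈ {±1}. -/
def sgn2 (za zb : ℂ) : ℂ := (1 + za + zb - za * zb) / 2

/-- `homIn ev odd a ζ` : `a` is homogeneous of parity sign `ζ`. -/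
def homIn {P : Type*} [AddCommGroup P] [Module ℂ P]
    (ev odd : Submodule ℂ P) (a : P) (z : ℂ) : Prop :=
  (z = 1 ∧ a ∈ ev) ∨ (z = -1 ∧ a ∈ odd)

/-- A finite simple Lie superalgebra over ℂ with an sl₂-triple (E,H,F), a compatible
even nondegenerate supersymmetric invariant bilinear form, the ad(H/2)-eigenspace
½ℤ-grading, and the dual bases of g^F = ker(ad F), g^E = ker(ad E) coming from
sl₂-representation theory. -/
structure NS where
  g : Type
  [iag : AddCommGroup g]
  [img : Module ℂ g]
  [ifd : FiniteDimensional ℂ g]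
  /-- even and odd parts -/
  gev : Submodule ℂ g
  godd : Submodule ℂ g
  gparity : IsCompl gev godd
  /-- the Lie bracket -/
  br : g →ₗ[ℂ] g →ₗ[ℂ] g
  br_parity : ∀ a b za zb, homIn gev godd a za → homIn gev godd b zb →
    homIn gev godd (br a b) (za * zb)
  br_skew : ∀ a b za zb, homIn gev godd a za → homIn gev godd b zb →
    br a b = -(sgn2 za zb) • br b a
  br_jacobi : ∀ a b c za zb, homIn gev godd a za → homIn gev godd b zb →
    br a (br b c) = br (br a b) c + sgn2 za zb • br b (br a c)
  simple : ∀ I : Submodule ℂ g, (∀ a, ∀ x ∈ I, br a x ∈ I) → I = ⊥ ∨ I = ⊤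
  nontriv : ∃ x : g, x ≠ 0
  /-- the invariant bilinear form -/
  B : g →ₗ[ℂ] g →ₗ[ℂ] ℂ
  B_supersym : ∀ a b za zb, homIn gev godd a za → homIn gev godd b zb →
    B a b = sgn2 za zb * B b a
  B_even : ∀ a ∈ gev, ∀ b ∈ godd, B a b = 0
  B_invariant : ∀ a b c, B (br a b) c = B a (br b c)
  B_nondeg : ∀ a, (∀ b, B a b = 0) → a = 0
  /-- the sl₂-triple -/
  E : g
  H : g
  F : g
  E_even : E ∈ gev
  H_even : H ∈ gev
  F_even : F ∈ gev
  tripleHE : br H E = (2 : ℂ) • E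
  tripleHF : br H F = (-2 : ℂ) • F
  tripleEF : br E F = H
  BEF : B E F = 1
  BHH : B H H = 2
  /-- the ad(H/2)-eigenspace decomposition g = ⊕_{i ∈ ½ℤ} g(i) -/
  gr : ℚ → Submodule ℂ g
  gr_eigen : ∀ i : ℚ, ∀ x ∈ gr i, br H x = ((2 * i : ℚ) : ℂ) • x
  gr_halfint : ∀ i : ℚ, (¬ ∃ m : ℤ, i = (m : ℚ) / 2) → gr i = ⊥
  gr_top : (⨆ i : ℚ, gr i) = ⊤
  /-- index set of the bases of g^F and g^E -/
  Jf : Type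
  [iJf : Fintype Jf]
  [idJf : DecidableEq Jf]
  /-- basis q_j of g^F = ker ad F -/
  qlo : Jf → g
  /-- basis q^j of g^E = ker ad E -/
  qhi : Jf → g
  /-- s(j) = s(q_j) = s(q^j) -/
  sj : Jf → ℂ
  /-- α_j, the ad(H/2)-weight of q^j -/
  αw : Jf → ℚ
  /-- 2α_j ∈ ℤ_{≥0} -/
  deg2 : Jf → ℕ
  deg2_eq : ∀ j, (deg2 j : ℚ) = 2 * αw j
  qlo_parity : ∀ j, homIn gev godd (qlo j) (sj j)
  qhi_parity : ∀ j, homIn gev godd (qhi j) (sj j)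
  qlo_ker : ∀ j, br F (qlo j) = 0
  qhi_ker : ∀ j, br E (qhi j) = 0
  qlo_wt : ∀ j, qlo j ∈ gr (-(αw j))
  qhi_wt : ∀ j, qhi j ∈ gr (αw j)
  qlo_indep : LinearIndependent ℂ qlo
  qhi_indep : LinearIndependent ℂ qhi
  qlo_span : ∀ x, br F x = 0 → x ∈ Submodule.span ℂ (Set.range qlo)
  qhi_span : ∀ x, br E x = 0 → x ∈ Submodule.span ℂ (Set.range qhi)
  pairqq : ∀ i j, B (qhi i) (qlo j) = if i = j then 1 else 0
  /-- q^j_n = (ad F)^n q^j -/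
  qup : Jf → ℕ → g
  qup_def : ∀ j n, qup j n = ((br F : Module.End ℂ g) ^ n) (qhi j)
  /-- dual basis q_j^n = ((-1)^n/((n!)² binom(2α_j,n))) (ad E)^n q_j -/
  qdn : Jf → ℕ → g
  qdn_def : ∀ j n, n ≤ deg2 j →
    qdn j n = (((-1 : ℂ) ^ n) / (((n.factorial : ℂ)) ^ 2 * ((deg2 j).choose n : ℂ))) •
      ((br E : Module.End ℂ g) ^ n) (qlo j)
  qdn_zero : ∀ j n, deg2 j < n → qdn j n = 0
  dualpair : ∀ i m j n, m ≤ deg2 i → n ≤ deg2 j →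
    B (qup i m) (qdn j n) = if i = j ∧ m = n then 1 else 0

attribute [instance] NS.iag NS.img NS.ifd NS.iJf NS.idJf

/-- The index set J^F_k = {(i,m) : q_i^m ∈ g(k)} (equivalently q^i_m ∈ g(-k)), as a finset. -/
def NS.JFset (S : NS) (k : ℚ) : Finset (S.Jf × ℕ) :=
  ((Finset.univ : Finset S.Jf) ×ˢ
      Finset.range (((Finset.univ : Finset S.Jf).sup S.deg2) + 1)).filter
    (fun p => p.2 ≤ S.deg2 p.1 ∧ S.qdn p.1 p.2 ∈ S.gr k)

/-- Over a finite-dimensional space, an injective `e` with `[h, e] = 2e` forces the space to vanish: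
conjugation by `e` would shift the trace of `h`. -/
theorem subsingleton_of_commutator_eq_two_smul {V : Type*} [AddCommGroup V] [Module ℂ V]
    [FiniteDimensional ℂ V] (h e : Module.End ℂ V) (hcomm : h * e = e * h + (2 : ℂ) • e)
    (hker : LinearMap.ker e = ⊥) : Subsingleton V := by
  obtain ⟨u, rfl⟩ := (LinearMap.isUnit_iff_ker_eq_bot e).2 hker
  have hconj : h = u * h * ↑u⁻¹ + (2 : ℂ) • (1 : Module.End ℂ V) := by
    calc h = h * u * ↑u⁻¹ := by rw [mul_assoc, Units.mul_inv, mul_one]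
      _ = _ := by rw [hcomm, add_mul, smul_mul_assoc, Units.mul_inv]
  have htr := congrArg (LinearMap.trace ℂ V) hconj
  rw [map_add, map_smul, LinearMap.trace_mul_comm, ← mul_assoc, Units.inv_mul, one_mul,
    LinearMap.trace_one] at htr
  have hdim : (Module.finrank ℂ V : ℂ) = 0 := by simpa using htr
  exact Module.finrank_zero_iff.1 (by exact_mod_cast hdim)

theorem homIn.smul {P : Type*} [AddCommGroup P] [Module ℂ P] {ev odd : Submodule ℂ P} {a : P}
    {z : ℂ} (h : homIn ev odd a z) (c : ℂ) : homIn ev odd (c • a) z :=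
  h.imp (fun h => ⟨h.1, ev.smul_mem c h.2⟩) (fun h => ⟨h.1, odd.smul_mem c h.2⟩)

namespace NS

variable (S : NS)

theorem exists_even_add_odd (x : S.g) : ∃ a ∈ S.gev, ∃ b ∈ S.godd, a + b = x :=
  Submodule.mem_sup.1 (S.gparity.sup_eq_top ▸ Submodule.mem_top)

theorem br_even_skew {X : S.g} (hX : X ∈ S.gev) (x : S.g) : S.br x X = -S.br X x := by
  obtain ⟨a, ha, b, hb, rfl⟩ := S.exists_even_add_odd x
  have h₀ := S.br_skew a X 1 1 (Or.inl ⟨rfl, ha⟩) (Or.inl ⟨rfl, hX⟩)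
  have h₁ := S.br_skew b X (-1) 1 (Or.inr ⟨rfl, hb⟩) (Or.inl ⟨rfl, hX⟩)
  norm_num [sgn2] at h₀ h₁
  rw [map_add, map_add, LinearMap.add_apply, h₀, h₁, neg_add]

theorem br_even_jacobi {X Y : S.g} (hX : X ∈ S.gev) (hY : Y ∈ S.gev) (x : S.g) :
    S.br X (S.br Y x) = S.br (S.br X Y) x + S.br Y (S.br X x) := by
  have h := S.br_jacobi X Y x 1 1 (Or.inl ⟨rfl, hX⟩) (Or.inl ⟨rfl, hY⟩)
  norm_num [sgn2] at h
  exact h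

theorem B_even_invariant {X : S.g} (hX : X ∈ S.gev) (x y : S.g) :
    S.B (S.br X x) y = -S.B x (S.br X y) := by
  rw [← S.B_invariant, S.br_even_skew hX x, map_neg, LinearMap.neg_apply, neg_neg]

theorem B_swap {a b : S.g} {za zb : ℂ} (ha : homIn S.gev S.godd a za)
    (hb : homIn S.gev S.godd b zb) : za * S.B a b = S.B b a := by
  have hswap := S.B_supersym b a zb za hb ha
  rcases ha with ⟨rfl, ha⟩ | ⟨rfl, ha⟩ <;> rcases hb with ⟨rfl, hb⟩ | ⟨rfl, hb⟩ <;>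
    norm_num [sgn2] at hswap ⊢
  · exact hswap.symm
  · exact hswap.symm
  · rw [← hswap, S.B_even b hb a ha, neg_zero]
  · exact hswap.symm

theorem br_H_br_E (x : S.g) :
    S.br S.H (S.br S.E x) = S.br S.E (S.br S.H x) + (2 : ℂ) • S.br S.E x := by
  rw [S.br_even_jacobi S.H_even S.E_even, S.tripleHE, map_smul, LinearMap.smul_apply, add_comm]

theorem br_F_br_E (x : S.g) :
    S.br S.F (S.br S.E x) = S.br S.E (S.br S.F x) - S.br S.H x := by
  rw [S.br_even_jacobi S.F_even S.E_even, S.br_even_skew S.E_even, S.tripleEF, map_neg,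
    LinearMap.neg_apply, neg_add_eq_sub]

theorem br_H_qlo (j : S.Jf) : S.br S.H (S.qlo j) = -(S.deg2 j : ℂ) • S.qlo j := by
  rw [S.gr_eigen _ _ (S.qlo_wt j), mul_neg, ← S.deg2_eq]
  push_cast
  rfl

theorem br_H_pow_E_qlo (j : S.Jf) (n : ℕ) :
    S.br S.H (((S.br S.E : Module.End ℂ S.g) ^ n) (S.qlo j)) =
      (2 * n - S.deg2 j : ℂ) • ((S.br S.E : Module.End ℂ S.g) ^ n) (S.qlo j) := by
  induction n with
  | zero => simp [S.br_H_qlo]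
  | succ n ih =>
    rw [pow_succ', Module.End.mul_apply, S.br_H_br_E, ih, map_smul, ← add_smul]
    congr 1
    push_cast
    ring

theorem br_F_pow_succ_E_qlo (j : S.Jf) (n : ℕ) :
    S.br S.F (((S.br S.E : Module.End ℂ S.g) ^ (n + 1)) (S.qlo j)) =
      ((n + 1) * (S.deg2 j - n) : ℂ) • ((S.br S.E : Module.End ℂ S.g) ^ n) (S.qlo j) := by
  induction n with
  | zero => simp [S.br_F_br_E, S.qlo_ker, S.br_H_qlo]
  | succ n ih =>
    rw [pow_succ', Module.End.mul_apply, S.br_F_br_E, ih, S.br_H_pow_E_qlo, map_smul,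
      ← Module.End.mul_apply, ← pow_succ', ← sub_smul]
    congr 1
    push_cast
    ring

/-- The kernel of `ad F` has no vectors of positive weight. -/
theorem eq_zero_of_br_F_eq_zero {x : S.g} {k : ℕ} (hk : 0 < k) (hF : S.br S.F x = 0)
    (hH : S.br S.H x = (k : ℂ) • x) : x = 0 := by
  obtain ⟨c, rfl⟩ := (Submodule.mem_span_range_iff_exists_fun ℂ).1 (S.qlo_span x hF)
  have hsum : ∑ j, (c j * (k + S.deg2 j)) • S.qlo j = 0 := by
    rw [map_sum, Finset.smul_sum] at hH
    rw [← sub_eq_zero.2 hH.symm, ← Finset.sum_sub_distrib]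
    refine Finset.sum_congr rfl fun j _ => ?_
    rw [map_smul, S.br_H_qlo, smul_smul, smul_smul, ← sub_smul]
    congr 1
    ring
  refine Finset.sum_eq_zero fun j _ => ?_
  have hj := Fintype.linearIndependent_iff.1 S.qlo_indep _ hsum j
  have hpos : (k + S.deg2 j : ℂ) ≠ 0 := by exact_mod_cast (by omega : k + S.deg2 j ≠ 0)
  rw [(mul_eq_zero.1 hj).resolve_right hpos, zero_smul]

theorem pow_E_qlo_eq_zero (j : S.Jf) :
    ((S.br S.E : Module.End ℂ S.g) ^ (S.deg2 j + 1)) (S.qlo j) = 0 := by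
  refine S.eq_zero_of_br_F_eq_zero (k := S.deg2 j + 2) (by omega) ?_ ?_
  · rw [S.br_F_pow_succ_E_qlo, sub_self, mul_zero, zero_smul]
  · rw [S.br_H_pow_E_qlo]
    congr 1
    push_cast
    ring

theorem qdn_parity (j : S.Jf) {n : ℕ} (hn : n ≤ S.deg2 j) :
    homIn S.gev S.godd (S.qdn j n) (S.sj j) := by
  rw [S.qdn_def j n hn]
  refine homIn.smul ?_ _
  clear hn
  induction n with
  | zero => exact S.qlo_parity j
  | succ n ih =>
    rw [pow_succ', Module.End.mul_apply, ← one_mul (S.sj j)]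
    exact S.br_parity _ _ _ _ (Or.inl ⟨rfl, S.E_even⟩) ih

theorem br_H_qdn (j : S.Jf) (n : ℕ) :
    S.br S.H (S.qdn j n) = (2 * n - S.deg2 j : ℂ) • S.qdn j n := by
  rcases le_or_gt n (S.deg2 j) with hn | hn
  · rw [S.qdn_def j n hn, map_smul, S.br_H_pow_E_qlo, smul_comm]
  · rw [S.qdn_zero j n hn, map_zero, smul_zero]

/-- The recursion between consecutive normalizing coefficients of the dual basis. -/
theorem dual_coeff_succ {N n : ℕ} (hn : n < N) :
    (-1 : ℂ) ^ n / ((n.factorial : ℂ) ^ 2 * (N.choose n : ℂ)) =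
      -((n + 1) * (N - n)) *
        ((-1 : ℂ) ^ (n + 1) / (((n + 1).factorial : ℂ) ^ 2 * (N.choose (n + 1) : ℂ))) := by
  have hchoose : (N.choose (n + 1) : ℂ) * (n + 1) = N.choose n * (N - n) := by
    have h := congrArg (Nat.cast : ℕ → ℂ) (Nat.choose_succ_right_eq N n)
    push_cast [Nat.cast_sub hn.le] at h
    exact h
  have h₁ : (n.factorial : ℂ) ≠ 0 := by exact_mod_cast n.factorial_ne_zero
  have h₂ : (N.choose n : ℂ) ≠ 0 := by exact_mod_cast (Nat.choose_pos hn.le).ne'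
  have h₃ : (N.choose (n + 1) : ℂ) ≠ 0 := by exact_mod_cast (Nat.choose_pos hn).ne'
  have h₄ : (n + 1 : ℂ) ≠ 0 := by exact_mod_cast n.succ_ne_zero
  rw [Nat.factorial_succ, pow_succ]
  push_cast
  field_simp
  linear_combination (-1 : ℂ) ^ n * hchoose

theorem br_E_qdn (j : S.Jf) (n : ℕ) :
    S.br S.E (S.qdn j n) = (-((n + 1) * (S.deg2 j - n)) : ℂ) • S.qdn j (n + 1) := by
  rcases lt_trichotomy n (S.deg2 j) with hn | rfl | hn
  · rw [S.qdn_def j n hn.le, S.qdn_def j (n + 1) hn, dual_coeff_succ hn, smul_smul, map_smul,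
      pow_succ' (S.br S.E : Module.End ℂ S.g), Module.End.mul_apply]
  · rw [S.qdn_def j _ le_rfl, map_smul, ← Module.End.mul_apply, ← pow_succ',
      S.pow_E_qlo_eq_zero, S.qdn_zero j _ (Nat.lt_succ_self _), smul_zero, smul_zero]
  · rw [S.qdn_zero j n hn, S.qdn_zero j (n + 1) (by omega), map_zero, smul_zero]

theorem br_F_qdn_succ (j : S.Jf) {n : ℕ} (hn : n < S.deg2 j) :
    S.br S.F (S.qdn j (n + 1)) = -S.qdn j n := by
  rw [S.qdn_def j n hn.le, S.qdn_def j (n + 1) hn, dual_coeff_succ hn, map_smul,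
    S.br_F_pow_succ_E_qlo, smul_smul, ← neg_smul]
  congr 1
  ring

theorem qdn_zero_eq_qlo (j : S.Jf) : S.qdn j 0 = S.qlo j := by
  simp [S.qdn_def j 0 (Nat.zero_le _)]

theorem qdn_ne_zero {j : S.Jf} {n : ℕ} (hn : n ≤ S.deg2 j) : S.qdn j n ≠ 0 := by
  intro h
  have hpair := S.dualpair j n j n hn hn
  simp [h] at hpair

/-- Each `gr k` is the whole eigenspace of `ad (H/2)`. -/
theorem mem_gr_iff (k : ℚ) (x : S.g) : x ∈ S.gr k ↔ S.br S.H x = ((2 * k : ℚ) : ℂ) • x := by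
  refine ⟨S.gr_eigen k x, fun hx => ?_⟩
  let eig : ℚ → Submodule ℂ S.g := fun i =>
    Module.End.eigenspace (S.br S.H : Module.End ℂ S.g) ((2 * i : ℚ) : ℂ)
  have hle : ∀ i, S.gr i ≤ eig i := fun i y hy =>
    Module.End.mem_eigenspace_iff.2 (S.gr_eigen i y hy)
  have hind : iSupIndep eig :=
    (Module.End.eigenspaces_iSupIndep (S.br S.H : Module.End ℂ S.g)).comp
      (f := fun i : ℚ => ((2 * i : ℚ) : ℂ)) fun a b hab => by
        simpa using hab
  have htop : x ∈ S.gr k ⊔ ⨆ (i) (_ : i ≠ k), S.gr i := by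
    rw [← iSup_split_single, S.gr_top]
    exact Submodule.mem_top
  obtain ⟨a, ha, b, hb, rfl⟩ := Submodule.mem_sup.1 htop
  have hbk : b ∈ eig k := by
    have := (eig k).sub_mem (Module.End.mem_eigenspace_iff.2 hx) (hle k ha)
    rwa [add_sub_cancel_left] at this
  have hb0 : b = 0 :=
    Submodule.disjoint_def.1 (hind k) b hbk (iSup₂_mono (fun i _ => hle i) hb)
  rwa [hb0, add_zero]

theorem qdn_mem_gr_iff {j : S.Jf} {n : ℕ} (hn : n ≤ S.deg2 j) (k : ℚ) :
    S.qdn j n ∈ S.gr k ↔ (2 * n - S.deg2 j : ℚ) = 2 * k := by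
  rw [S.mem_gr_iff, S.br_H_qdn, (smul_left_injective ℂ (S.qdn_ne_zero hn)).eq_iff]
  norm_cast

/-- The left orthogonal complement of the span of all `q_j^n`. -/
def qdnOrthogonal : Submodule ℂ S.g := ⨅ (j) (n), LinearMap.ker (S.B.flip (S.qdn j n))

theorem mem_qdnOrthogonal {x : S.g} :
    x ∈ S.qdnOrthogonal ↔ ∀ j n, S.B x (S.qdn j n) = 0 := by
  simp [qdnOrthogonal, Submodule.mem_iInf]

theorem qdnOrthogonal_eq_bot : S.qdnOrthogonal = ⊥ := by
  have hE : ∀ x ∈ S.qdnOrthogonal, S.br S.E x ∈ S.qdnOrthogonal := fun x hx =>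
    S.mem_qdnOrthogonal.2 fun j n => by
      rw [S.B_even_invariant S.E_even, S.br_E_qdn, map_smul, S.mem_qdnOrthogonal.1 hx,
        smul_zero, neg_zero]
  have hH : ∀ x ∈ S.qdnOrthogonal, S.br S.H x ∈ S.qdnOrthogonal := fun x hx =>
    S.mem_qdnOrthogonal.2 fun j n => by
      rw [S.B_even_invariant S.H_even, S.br_H_qdn, map_smul, S.mem_qdnOrthogonal.1 hx,
        smul_zero, neg_zero]
  rw [← Submodule.subsingleton_iff_eq_bot]
  refine subsingleton_of_commutator_eq_two_smul ((S.br S.H).restrict hH) ((S.br S.E).restrict hE)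
    (LinearMap.ext fun x => Subtype.ext (S.br_H_br_E x)) ?_
  rw [LinearMap.ker_eq_bot']
  rintro ⟨x, hx⟩ hx0
  obtain ⟨c, rfl⟩ := (Submodule.mem_span_range_iff_exists_fun ℂ).1
    (S.qhi_span x (congrArg Subtype.val hx0))
  refine Subtype.ext (Finset.sum_eq_zero fun j _ => ?_)
  have hj := S.mem_qdnOrthogonal.1 hx j 0
  simp only [S.qdn_zero_eq_qlo, map_sum, LinearMap.sum_apply, map_smul, LinearMap.smul_apply,
    S.pairqq, smul_eq_mul, mul_ite, mul_one, mul_zero, Finset.sum_ite_eq', Finset.mem_univ,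
    if_true] at hj
  rw [hj, zero_smul]

/-- The index set of the basis `q^j_n` of `g`. -/
def basisIndex : Finset (S.Jf × ℕ) :=
  ((Finset.univ : Finset S.Jf) ×ˢ
      Finset.range (((Finset.univ : Finset S.Jf).sup S.deg2) + 1)).filter
    (fun p => p.2 ≤ S.deg2 p.1)

theorem mem_basisIndex {p : S.Jf × ℕ} : p ∈ S.basisIndex ↔ p.2 ≤ S.deg2 p.1 := by
  have hsup : S.deg2 p.1 ≤ Finset.univ.sup S.deg2 := Finset.le_sup (Finset.mem_univ _)
  simp only [basisIndex, Finset.mem_filter, Finset.mem_product, Finset.mem_univ,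
    Finset.mem_range, true_and]
  omega

theorem JFset_eq_filter (k : ℚ) :
    S.JFset k = S.basisIndex.filter (fun p => S.qdn p.1 p.2 ∈ S.gr k) := by
  rw [JFset, basisIndex, Finset.filter_filter]

theorem sum_B_qdn_smul_qup (x : S.g) :
    ∑ p ∈ S.basisIndex, S.B x (S.qdn p.1 p.2) • S.qup p.1 p.2 = x := by
  refine (sub_eq_zero.1 ?_).symm
  rw [← Submodule.mem_bot ℂ, ← S.qdnOrthogonal_eq_bot, S.mem_qdnOrthogonal]
  intro j n
  rcases le_or_gt n (S.deg2 j) with hn | hn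
  · rw [map_sub, LinearMap.sub_apply, map_sum, LinearMap.sum_apply,
      Finset.sum_eq_single_of_mem (j, n) (S.mem_basisIndex.2 hn)]
    · simp [S.dualpair j n j n hn hn]
    · intro p hp hne
      rw [map_smul, LinearMap.smul_apply, S.dualpair _ _ _ _ (S.mem_basisIndex.1 hp) hn,
        if_neg fun h => hne (Prod.ext h.1 h.2), smul_zero]
  · rw [S.qdn_zero j n hn, map_zero]

/-- The shift `q_j^n ↦ q_j^{n+1}` is skew-adjoint on the basis. -/
theorem B_qdn_succ_left {i j : S.Jf} {m n : ℕ} (hm : m ≤ S.deg2 i) (hn : n ≤ S.deg2 j) :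
    S.B (S.qdn i (m + 1)) (S.qdn j n) = -S.B (S.qdn i m) (S.qdn j (n + 1)) := by
  have hcoeff : ∀ {N k : ℕ}, k < N → (-((k + 1) * (N - k)) : ℂ) ≠ 0 := by
    intro N k hk
    refine neg_ne_zero.2 (mul_ne_zero (by exact_mod_cast k.succ_ne_zero) (sub_ne_zero.2 ?_))
    exact_mod_cast hk.ne'
  have hinv := S.B_even_invariant S.E_even (S.qdn i m) (S.qdn j n)
  rw [S.br_E_qdn, S.br_E_qdn, map_smul, map_smul, LinearMap.smul_apply, smul_eq_mul,
    smul_eq_mul] at hinv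
  rcases hm.lt_or_eq with hm | rfl <;> rcases hn.lt_or_eq with hn | rfl
  · have hF := S.B_even_invariant S.F_even (S.qdn i (m + 1)) (S.qdn j (n + 1))
    rw [S.br_F_qdn_succ i hm, S.br_F_qdn_succ j hn, map_neg, map_neg, LinearMap.neg_apply,
      neg_neg] at hF
    exact hF.symm
  · rw [S.qdn_zero j (S.deg2 j + 1) (Nat.lt_succ_self _)] at hinv ⊢
    rw [map_zero, mul_zero, neg_zero] at hinv
    rw [map_zero, neg_zero, (mul_eq_zero.1 hinv).resolve_left (hcoeff hm)]
  · rw [S.qdn_zero i (S.deg2 i + 1) (Nat.lt_succ_self _)] at hinv ⊢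
    rw [map_zero, LinearMap.zero_apply, mul_zero, zero_eq_neg] at hinv
    rw [map_zero, LinearMap.zero_apply, (mul_eq_zero.1 hinv).resolve_left (hcoeff hn), neg_zero]
  · simp [S.qdn_zero _ _ (Nat.lt_succ_self _)]

/-- The form pairs only opposite weights. -/
theorem weight_add_eq_zero_of_B_ne_zero {i j : S.Jf} {m n : ℕ}
    (h : S.B (S.qdn i m) (S.qdn j n) ≠ 0) :
    (2 * m - S.deg2 i : ℚ) + (2 * n - S.deg2 j) = 0 := by
  have hinv := S.B_even_invariant S.H_even (S.qdn i m) (S.qdn j n)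
  rw [S.br_H_qdn, S.br_H_qdn, map_smul, map_smul, LinearMap.smul_apply, smul_eq_mul,
    smul_eq_mul, ← neg_mul] at hinv
  have hsum : (2 * m - S.deg2 i : ℂ) + (2 * n - S.deg2 j) = 0 := by
    rw [mul_right_cancel₀ h hinv, neg_add_cancel]
  exact_mod_cast hsum

theorem shift_coeff_eq (t : ℚ) {p q : S.Jf × ℕ} (hp : p ∈ S.basisIndex)
    (hq : q ∈ S.basisIndex) :
    (if S.qdn p.1 p.2 ∈ S.gr (-t) then
        S.sj p.1 * S.B (S.qdn p.1 (p.2 + 1)) (S.qdn q.1 q.2) else 0) =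
      -(if S.qdn q.1 q.2 ∈ S.gr (t - 1) then
        S.B (S.qdn q.1 (q.2 + 1)) (S.qdn p.1 p.2) else 0) := by
  rw [S.mem_basisIndex] at hp hq
  have hskew := S.B_qdn_succ_left hp hq
  have hswap : S.sj p.1 * S.B (S.qdn p.1 p.2) (S.qdn q.1 (q.2 + 1)) =
      S.B (S.qdn q.1 (q.2 + 1)) (S.qdn p.1 p.2) := by
    rcases hq.lt_or_eq with hlt | heq
    · exact S.B_swap (S.qdn_parity p.1 hp) (S.qdn_parity q.1 hlt)
    · simp [S.qdn_zero q.1 (q.2 + 1) (by omega)]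
  have hcoeff : S.sj p.1 * S.B (S.qdn p.1 (p.2 + 1)) (S.qdn q.1 q.2) =
      -S.B (S.qdn q.1 (q.2 + 1)) (S.qdn p.1 p.2) := by
    rw [hskew, mul_neg, hswap]
  rw [hcoeff, S.qdn_mem_gr_iff hp, S.qdn_mem_gr_iff hq]
  by_cases h0 : S.B (S.qdn q.1 (q.2 + 1)) (S.qdn p.1 p.2) = 0
  · simp [h0]
  · have hwt := S.weight_add_eq_zero_of_B_ne_zero h0
    push_cast at hwt
    have hiff : (2 * p.2 - S.deg2 p.1 : ℚ) = 2 * -t ↔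
        (2 * q.2 - S.deg2 q.1 : ℚ) = 2 * (t - 1) := by
      constructor <;> intro h <;> linarith
    simp only [hiff]
    split_ifs <;> simp

end NS

/-- **Lemma 3.3** (Suh, "Structures of (supersymmetric) classical W-algebras").
For any t ∈ ½ℤ,
Σ_{(j,n)∈J^F_{-t}} s(j) q_n^j ⊗ q_j^{n+1} = -Σ_{(i,m)∈J^F_{t-1}} q_i^{m+1} ⊗ q_m^i
in g ⊗ g. -/
theorem statement0 (S : NS) (t : ℚ) (ht : ∃ m : ℤ, t = (m : ℚ) / 2) :
    ∑ p ∈ S.JFset (-t), S.sj p.1 • (S.qup p.1 p.2 ⊗ₜ[ℂ] S.qdn p.1 (p.2 + 1))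
      = - ∑ p ∈ S.JFset (t - 1), S.qdn p.1 (p.2 + 1) ⊗ₜ[ℂ] S.qup p.1 p.2 := by
  have hexp : ∀ p ∈ S.basisIndex, (if S.qdn p.1 p.2 ∈ S.gr (-t) then
      S.sj p.1 • (S.qup p.1 p.2 ⊗ₜ[ℂ] S.qdn p.1 (p.2 + 1)) else 0) =
      ∑ q ∈ S.basisIndex, (if S.qdn p.1 p.2 ∈ S.gr (-t) then
        S.sj p.1 * S.B (S.qdn p.1 (p.2 + 1)) (S.qdn q.1 q.2) else 0) •
          (S.qup p.1 p.2 ⊗ₜ[ℂ] S.qup q.1 q.2) := by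
    intro p _
    split_ifs
    · conv_lhs => rw [← S.sum_B_qdn_smul_qup (S.qdn p.1 (p.2 + 1))]
      simp only [tmul_sum, tmul_smul, Finset.smul_sum, smul_smul]
    · simp
  have hexp' : ∀ q ∈ S.basisIndex, (if S.qdn q.1 q.2 ∈ S.gr (t - 1) then
      S.qdn q.1 (q.2 + 1) ⊗ₜ[ℂ] S.qup q.1 q.2 else 0) =
      ∑ p ∈ S.basisIndex, (if S.qdn q.1 q.2 ∈ S.gr (t - 1) then
        S.B (S.qdn q.1 (q.2 + 1)) (S.qdn p.1 p.2) else 0) •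
          (S.qup p.1 p.2 ⊗ₜ[ℂ] S.qup q.1 q.2) := by
    intro q _
    split_ifs
    · conv_lhs => rw [← S.sum_B_qdn_smul_qup (S.qdn q.1 (q.2 + 1))]
      simp only [sum_tmul, smul_tmul']
    · simp
  rw [S.JFset_eq_filter, S.JFset_eq_filter, Finset.sum_filter, Finset.sum_filter,
    Finset.sum_congr rfl hexp, Finset.sum_congr rfl hexp', Finset.sum_comm,
    ← Finset.sum_neg_distrib]
  refine Finset.sum_congr rfl fun q hq => ?_
  rw [← Finset.sum_neg_distrib]
  refine Finset.sum_congr rfl fun p hp => ?_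
  rw [S.shift_coeff_eq t hp hq, neg_smul]

end
end

section
/- The normalizing constants C_{j,n} in the dual basis r_j^n = C_{j,n}(ad e)^n r_j (characterized by (r^i_m | r^n_j) = δ_{m,n}δ_{i,j}) are given by: C_{j,n} = 1/((m!)²·binom(2α_j,m)) if n = 2m is even, and C_{j,n} = −s(j)/((m+1)!·m!·binom(2α_j,m+1)) if n = 2m+1 is odd. -/
open Finsupp TensorProduct
open scoped Classical

noncomputable section

/-- A finite simple Lie superalgebra over ℂ with a subalgebra span{E,e,H,f,F} ≅ osp(1|2),
a compatible even nondegenerate supersymmetric invariant bilinear form, the ad(H/2)-eigenspace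
½ℤ-grading, and dual bases of g^f = ker(ad f) and g^e = ker(ad e). -/
structure SS where
  g : Type
  [iag : AddCommGroup g]
  [img : Module ℂ g]
  [ifd : FiniteDimensional ℂ g]
  gev : Submodule ℂ g
  godd : Submodule ℂ g
  gparity : IsCompl gev godd
  br : g →ₗ[ℂ] g →ₗ[ℂ] g
  br_parity : ∀ a b za zb, homIn gev godd a za → homIn gev godd b zb →
    homIn gev godd (br a b) (za * zb)
  br_skew : ∀ a b za zb, homIn gev godd a za → homIn gev godd b zb →
    br a b = -(sgn2 za zb) • br b a
  br_jacobi : ∀ a b c za zb, homIn gev godd a za → homIn gev godd b zb →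
    br a (br b c) = br (br a b) c + sgn2 za zb • br b (br a c)
  simple : ∀ I : Submodule ℂ g, (∀ a, ∀ x ∈ I, br a x ∈ I) → I = ⊥ ∨ I = ⊤
  nontriv : ∃ x : g, x ≠ 0
  B : g →ₗ[ℂ] g →ₗ[ℂ] ℂ
  B_supersym : ∀ a b za zb, homIn gev godd a za → homIn gev godd b zb →
    B a b = sgn2 za zb * B b a
  B_even : ∀ a ∈ gev, ∀ b ∈ godd, B a b = 0
  B_invariant : ∀ a b c, B (br a b) c = B a (br b c)
  B_nondeg : ∀ a, (∀ b, B a b = 0) → a = 0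
  /-- the osp(1|2)-subalgebra: E, e, H, f, F -/
  Ee : g
  ee : g
  He : g
  fe : g
  Fe : g
  E_even : Ee ∈ gev
  H_even : He ∈ gev
  F_even : Fe ∈ gev
  e_odd : ee ∈ godd
  f_odd : fe ∈ godd
  tripleHE : br He Ee = (2 : ℂ) • Ee
  tripleHF : br He Fe = (-2 : ℂ) • Fe
  tripleEF : br Ee Fe = He
  ospHe : br He ee = ee
  ospHf : br He fe = -fe
  ospee : br ee ee = (2 : ℂ) • Ee
  ospff : br fe fe = (-2 : ℂ) • Fe
  ospef : br ee fe = -He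
  ospFe : br Fe ee = fe
  ospEf : br Ee fe = ee
  BHH : B He He = 2
  BEF : B Ee Fe = 1
  Bef : B ee fe = -2
  /-- the ad(H/2)-eigenspace decomposition g = ⊕_{i ∈ ½ℤ} g(i) -/
  gr : ℚ → Submodule ℂ g
  gr_eigen : ∀ i : ℚ, ∀ x ∈ gr i, br He x = ((2 * i : ℚ) : ℂ) • x
  gr_halfint : ∀ i : ℚ, (¬ ∃ m : ℤ, i = (m : ℚ) / 2) → gr i = ⊥
  gr_top : (⨆ i : ℚ, gr i) = ⊤
  /-- index set of the bases of g^f and g^e -/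
  Jf : Type
  [iJf : Fintype Jf]
  [idJf : DecidableEq Jf]
  /-- basis r_j of g^f = ker ad f -/
  rlo : Jf → g
  /-- basis r^j of g^e = ker ad e -/
  rhi : Jf → g
  sj : Jf → ℂ
  /-- α_j, the ad(H/2)-weight of r^j -/
  αw : Jf → ℚ
  /-- 2α_j -/
  deg2 : Jf → ℕ
  deg2_eq : ∀ j, (deg2 j : ℚ) = 2 * αw j
  rlo_parity : ∀ j, homIn gev godd (rlo j) (sj j)
  rhi_parity : ∀ j, homIn gev godd (rhi j) (sj j)
  rlo_ker : ∀ j, br fe (rlo j) = 0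
  rhi_ker : ∀ j, br ee (rhi j) = 0
  rlo_wt : ∀ j, rlo j ∈ gr (-(αw j))
  rhi_wt : ∀ j, rhi j ∈ gr (αw j)
  rlo_indep : LinearIndependent ℂ rlo
  rhi_indep : LinearIndependent ℂ rhi
  rlo_span : ∀ x, br fe x = 0 → x ∈ Submodule.span ℂ (Set.range rlo)
  rhi_span : ∀ x, br ee x = 0 → x ∈ Submodule.span ℂ (Set.range rhi)
  pairrr : ∀ i j, B (rhi i) (rlo j) = if i = j then 1 else 0
  /-- r^i_m = (ad f)^m r^i -/
  rup : Jf → ℕ → g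
  rup_def : ∀ j m, rup j m = ((br fe : Module.End ℂ g) ^ m) (rhi j)
  /-- normalizing constants C_{j,n} -/
  Cjn : Jf → ℕ → ℂ
  /-- dual basis r_j^n = C_{j,n} (ad e)^n r_j -/
  rdn : Jf → ℕ → g
  rdn_def : ∀ j n, n ≤ 2 * deg2 j →
    rdn j n = Cjn j n • ((br ee : Module.End ℂ g) ^ n) (rlo j)
  rdn_zero : ∀ j n, 2 * deg2 j < n → rdn j n = 0
  dualpair : ∀ i m j n, m ≤ 2 * deg2 i → n ≤ 2 * deg2 j →
    B (rup i m) (rdn j n) = if i = j ∧ m = n then 1 else 0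

attribute [instance] SS.iag SS.img SS.ifd SS.iJf SS.idJf

/-- The index set J^f_t = {(i,m) : r_i^m ∈ g(t), r^i_m ∈ g(-t)}, as a finset. -/
def SS.JfSet (S : SS) (t : ℚ) : Finset (S.Jf × ℕ) :=
  ((Finset.univ : Finset S.Jf) ×ˢ
      Finset.range (2 * ((Finset.univ : Finset S.Jf).sup S.deg2) + 1)).filter
    (fun p => p.2 ≤ 2 * S.deg2 p.1 ∧ S.rdn p.1 p.2 ∈ S.gr t ∧ S.rup p.1 p.2 ∈ S.gr (-t))

end

noncomputable section

lemma sgn2_neg_one_left (z : ℂ) : sgn2 (-1) z = z := by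
  unfold sgn2
  ring

namespace SS

variable (S : SS)

lemma homIn_fe : homIn S.gev S.godd S.fe (-1) := Or.inr ⟨rfl, S.f_odd⟩

lemma homIn_ee : homIn S.gev S.godd S.ee (-1) := Or.inr ⟨rfl, S.e_odd⟩

lemma sj_mul_self (j : S.Jf) : S.sj j * S.sj j = 1 := by
  rcases S.rlo_parity j with ⟨h, -⟩ | ⟨h, -⟩ <;> simp [h]

lemma homIn_pow_fe (j : S.Jf) (n : ℕ) :
    homIn S.gev S.godd (((S.br S.fe : Module.End ℂ S.g) ^ n) (S.rhi j)) ((-1) ^ n * S.sj j) := by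
  induction n with
  | zero => simpa using S.rhi_parity j
  | succ n ih =>
    have h := S.br_parity _ _ _ _ S.homIn_fe ih
    rw [pow_succ', Module.End.mul_apply, pow_succ', mul_assoc]
    exact h

/-- Moving `ad f` across the form costs minus the parity sign of the left argument. -/
lemma B_br_fe {x : S.g} {z : ℂ} (hx : homIn S.gev S.godd x z) (y : S.g) :
    S.B (S.br S.fe x) y = -z * S.B x (S.br S.fe y) := by
  rw [S.br_skew _ _ _ _ S.homIn_fe hx, sgn2_neg_one_left, map_smul, LinearMap.smul_apply,
    S.B_invariant, smul_eq_mul]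

lemma br_fe_ee : S.br S.fe S.ee = -S.He := by
  rw [S.br_skew _ _ _ _ S.homIn_fe S.homIn_ee, sgn2_neg_one_left, S.ospef]
  simp

lemma br_fe_br_ee (x : S.g) :
    S.br S.fe (S.br S.ee x) = -S.br S.He x - S.br S.ee (S.br S.fe x) := by
  rw [S.br_jacobi _ _ _ _ _ S.homIn_fe S.homIn_ee, sgn2_neg_one_left, S.br_fe_ee]
  simp [sub_eq_add_neg]

lemma br_He_br_ee (x : S.g) :
    S.br S.He (S.br S.ee x) = S.br S.ee x + S.br S.ee (S.br S.He x) := by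
  rw [S.br_jacobi _ _ _ 1 _ (Or.inl ⟨rfl, S.H_even⟩) S.homIn_ee, S.ospHe]
  simp [sgn2]

lemma br_He_pow_ee (j : S.Jf) (n : ℕ) :
    S.br S.He (((S.br S.ee : Module.End ℂ S.g) ^ n) (S.rlo j)) =
      ((n : ℂ) - S.deg2 j) • ((S.br S.ee : Module.End ℂ S.g) ^ n) (S.rlo j) := by
  induction n with
  | zero =>
    have h : (S.deg2 j : ℂ) = 2 * (S.αw j : ℂ) := by exact_mod_cast S.deg2_eq j
    simp [S.gr_eigen _ _ (S.rlo_wt j), h]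
  | succ n ih =>
    rw [pow_succ', Module.End.mul_apply, S.br_He_br_ee, ih, map_smul]
    push_cast
    module

/-- `ad f` lowers `(ad e)^n r_j`, with a coefficient depending on the parity of `n`. -/
lemma br_fe_pow_ee (j : S.Jf) (m : ℕ) :
    S.br S.fe (((S.br S.ee : Module.End ℂ S.g) ^ (2 * m + 1)) (S.rlo j)) =
        ((S.deg2 j : ℂ) - m) • ((S.br S.ee : Module.End ℂ S.g) ^ (2 * m)) (S.rlo j) ∧
      S.br S.fe (((S.br S.ee : Module.End ℂ S.g) ^ (2 * m + 2)) (S.rlo j)) =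
        (-((m : ℂ) + 1)) • ((S.br S.ee : Module.End ℂ S.g) ^ (2 * m + 1)) (S.rlo j) := by
  have even_of_odd : ∀ m : ℕ,
      S.br S.fe (((S.br S.ee : Module.End ℂ S.g) ^ (2 * m + 1)) (S.rlo j)) =
        ((S.deg2 j : ℂ) - m) • ((S.br S.ee : Module.End ℂ S.g) ^ (2 * m)) (S.rlo j) →
      S.br S.fe (((S.br S.ee : Module.End ℂ S.g) ^ (2 * m + 2)) (S.rlo j)) =
        (-((m : ℂ) + 1)) • ((S.br S.ee : Module.End ℂ S.g) ^ (2 * m + 1)) (S.rlo j) := by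
    intro m h
    rw [pow_succ' _ (2 * m + 1), Module.End.mul_apply, S.br_fe_br_ee, h, S.br_He_pow_ee, map_smul,
      ← Module.End.mul_apply, ← pow_succ']
    push_cast
    module
  suffices h : S.br S.fe (((S.br S.ee : Module.End ℂ S.g) ^ (2 * m + 1)) (S.rlo j)) =
      ((S.deg2 j : ℂ) - m) • ((S.br S.ee : Module.End ℂ S.g) ^ (2 * m)) (S.rlo j) from
    ⟨h, even_of_odd m h⟩
  induction m with
  | zero =>
    have h := S.br_He_pow_ee j 0
    simp only [pow_zero, Module.End.one_apply] at h
    simp [S.br_fe_br_ee, h, S.rlo_ker]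
  | succ m ih =>
    rw [pow_succ' _ (2 * (m + 1)), Module.End.mul_apply, S.br_fe_br_ee, S.br_He_pow_ee, mul_add_one,
      even_of_odd m ih, map_smul, ← Module.End.mul_apply, ← pow_succ']
    push_cast
    module

/-- The pairing of the unnormalized vectors `(ad f)^n r^j` and `(ad e)^n r_j`. -/
def pairing (j : S.Jf) (n : ℕ) : ℂ :=
  S.B (((S.br S.fe : Module.End ℂ S.g) ^ n) (S.rhi j))
    (((S.br S.ee : Module.End ℂ S.g) ^ n) (S.rlo j))

lemma pairing_succ (j : S.Jf) (n : ℕ) :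
    S.pairing j (n + 1) = -((-1) ^ n * S.sj j) *
      S.B (((S.br S.fe : Module.End ℂ S.g) ^ n) (S.rhi j))
        (S.br S.fe (((S.br S.ee : Module.End ℂ S.g) ^ (n + 1)) (S.rlo j))) := by
  rw [pairing, pow_succ' (S.br S.fe : Module.End ℂ S.g), Module.End.mul_apply,
    S.B_br_fe (S.homIn_pow_fe j n)]

lemma pairing_odd_eq (j : S.Jf) (m : ℕ) :
    S.pairing j (2 * m + 1) = -S.sj j * ((S.deg2 j : ℂ) - m) * S.pairing j (2 * m) := by
  rw [pairing_succ, (S.br_fe_pow_ee j m).1, map_smul, smul_eq_mul, pow_mul, pairing]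
  simp only [even_two, Even.neg_pow, one_pow]
  ring

lemma pairing_even_eq (j : S.Jf) (m : ℕ) :
    S.pairing j (2 * m + 2) = -S.sj j * ((m : ℂ) + 1) * S.pairing j (2 * m + 1) := by
  rw [pairing_succ, (S.br_fe_pow_ee j m).2, map_smul, smul_eq_mul, pow_succ, pow_mul, pairing]
  simp only [even_two, Even.neg_pow, one_pow]
  ring

lemma choose_succ_mul_cast (d m : ℕ) :
    (d.choose (m + 1) : ℂ) * (m + 1) = d.choose m * ((d : ℂ) - m) := by
  rcases le_or_gt m d with h | h
  · rw [← Nat.cast_sub h]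
    exact_mod_cast Nat.choose_succ_right_eq d m
  · simp [Nat.choose_eq_zero_of_lt h, Nat.choose_eq_zero_of_lt (h.trans m.lt_succ_self)]

lemma pairing_even (j : S.Jf) (m : ℕ) :
    S.pairing j (2 * m) = (m.factorial : ℂ) ^ 2 * (S.deg2 j).choose m := by
  induction m with
  | zero => simp [pairing, S.pairrr]
  | succ m ih =>
    rw [mul_add_one, pairing_even_eq, pairing_odd_eq, ih, Nat.factorial_succ]
    push_cast
    linear_combination ((m : ℂ) + 1) * ((S.deg2 j : ℂ) - m) * (m.factorial : ℂ) ^ 2 *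
        (S.deg2 j).choose m * S.sj_mul_self j -
      ((m : ℂ) + 1) * (m.factorial : ℂ) ^ 2 * choose_succ_mul_cast (S.deg2 j) m

lemma pairing_odd (j : S.Jf) (m : ℕ) :
    S.pairing j (2 * m + 1) =
      -S.sj j * ((m + 1).factorial * m.factorial * (S.deg2 j).choose (m + 1)) := by
  rw [pairing_odd_eq, pairing_even, Nat.factorial_succ]
  push_cast
  linear_combination S.sj j * (m.factorial : ℂ) ^ 2 * choose_succ_mul_cast (S.deg2 j) m

lemma Cjn_mul_pairing (j : S.Jf) (n : ℕ) (hn : n ≤ 2 * S.deg2 j) :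
    S.Cjn j n * S.pairing j n = 1 := by
  have h := S.dualpair j n j n hn hn
  rwa [S.rup_def, S.rdn_def j n hn, map_smul, smul_eq_mul, if_pos ⟨rfl, rfl⟩] at h

end SS

/-- **Lemma 6.2**: the normalizing constants C_{j,n} of the dual basis
r_j^n = C_{j,n}(ad e)^n r_j, characterized by (r^i_m | r^n_j) = δ_{m,n}δ_{i,j}, are
C_{j,2m} = 1/((m!)² binom(2α_j, m)) and C_{j,2m+1} = -s(j)/((m+1)! m! binom(2α_j, m+1)). -/
theorem statement15 (S : SS) (j : S.Jf) (n : ℕ) (hn : n ≤ 2 * S.deg2 j) :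
    S.Cjn j n =
      if Even n then
        1 / (((n / 2).factorial : ℂ) ^ 2 * ((S.deg2 j).choose (n / 2) : ℂ))
      else
        - S.sj j / ((((n / 2) + 1).factorial : ℂ) * ((n / 2).factorial : ℂ)
          * ((S.deg2 j).choose (n / 2 + 1) : ℂ)) := by
  have h := S.Cjn_mul_pairing j n hn
  obtain ⟨m, rfl | rfl⟩ := n.even_or_odd'
  · rw [if_pos (even_two_mul m), Nat.mul_div_cancel_left m two_pos]
    rw [S.pairing_even] at h
    exact eq_one_div_of_mul_eq_one_left h
  · rw [if_neg (by simp), show (2 * m + 1) / 2 = m by omega]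
    rw [S.pairing_odd] at h
    have hne := right_ne_zero_of_mul (right_ne_zero_of_mul_eq_one h)
    rw [eq_div_iff hne]
    linear_combination -S.sj j * h - S.Cjn j (2 * m + 1) *
      ((m + 1).factorial * m.factorial * (S.deg2 j).choose (m + 1)) * S.sj_mul_self j

end
end
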